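/- arXiv:0903.4969 — 3 statements merged into one kernel-verified Lean document; each statement's English description precedes it below -/
import Mathlib

section
/- In 𝔽₂[t₁,…,t₆], the product ∏_{1≤j<k≤6} (1 + t_j + t_k) is congruent to (1 + e₄ + e₆)² modulo the ideal generated by e₁, e₂, e₃, e₅. -/
open MvPolynomial Finset

/-- The `i`-th elementary symmetric polynomial in `𝔽₂[t₁,…,t₆]`. -/
noncomputable def e (i : ℕ) : MvPolynomial (Fin 6) (ZMod 2) :=
  esymm (Fin 6) (ZMod 2) i

/-
Elementary symmetric polynomials take arbitrary values at points over an algebraically closed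
field, so a symmetric polynomial lies in an ideal generated by some of them as soon as it vanishes
at their common zeros. At a point `x` where `e₁ = e₂ = e₃ = e₅ = 0`, Vieta's formula reads
`f(y) := ∏ᵢ (y + xᵢ) = y⁶ + e₄ y² + e₆`, and since `xᵢ + xᵢ = 0` the square of the product `P` of
all `1 + xⱼ + xₖ` with `j < k` is `∏ᵢ f(1 + xᵢ)`. Now `f(1 + y) = f(y) + (y⁴ + y² + 1 + e₄)`, and if
`u` is a root of the quartic in brackets, that quartic is `(u + y)² (u + 1 + y)²`. Hence
`P² = f(u)² f(u + 1)² = f(u)⁴ = (1 + e₄ + e₆)⁴`, and square roots are unique in a field of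
characteristic two.
-/

section ZeroLocus

variable {σ R K : Type*} [CommRing R] [CommRing K] [IsDomain K] [Infinite K] [Algebra R K]
  [FaithfulSMul R K]

theorem eq_zero_of_forall_aeval_eq_zero {q : MvPolynomial σ R}
    (h : ∀ c : σ → K, aeval c q = 0) : q = 0 := by
  refine map_injective _ (FaithfulSMul.algebraMap_injective R K) (MvPolynomial.funext fun c ↦ ?_)
  rw [eval_map, ← aeval_def, h c, map_zero, map_zero]

theorem sub_aeval_indicator_mem_span_X_image (S : Set σ) (q : MvPolynomial σ R) :
    q - aeval (Sᶜ.indicator X) q ∈ Ideal.span (X '' S : Set (MvPolynomial σ R)) := by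
  set I := Ideal.span (X '' S : Set (MvPolynomial σ R))
  have h : Ideal.Quotient.mkₐ R I = (Ideal.Quotient.mkₐ R I).comp (aeval (Sᶜ.indicator X)) := by
    ext i
    by_cases hi : i ∈ S
    · simpa [hi, Ideal.Quotient.eq_zero_iff_mem] using
        Ideal.subset_span (Set.mem_image_of_mem X hi)
    · simp [hi]
  exact Ideal.Quotient.eq.mp (DFunLike.congr_fun h q)

theorem mem_span_X_image_of_forall_aeval_eq_zero {S : Set σ} {q : MvPolynomial σ R}
    (h : ∀ c : σ → K, (∀ i ∈ S, c i = 0) → aeval c q = 0) :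
    q ∈ Ideal.span (X '' S : Set (MvPolynomial σ R)) := by
  suffices aeval (Sᶜ.indicator X) q = (0 : MvPolynomial σ R) by
    simpa only [this, sub_zero] using sub_aeval_indicator_mem_span_X_image S q
  refine eq_zero_of_forall_aeval_eq_zero (K := K) fun c ↦ ?_
  rw [comp_aeval_apply]
  exact h _ fun i hi ↦ by simp [hi]

end ZeroLocus

section Esymm

variable {σ : Type*} [Fintype σ]

theorem exists_univ_val_map_eq {α : Type*} {s : Multiset α} (hs : s.card = Fintype.card σ) :
    ∃ x : σ → α, univ.val.map x = s := by
  induction s using Quotient.inductionOn with | _ l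
  have hl : Fintype.card σ = l.length := hs.symm
  refine ⟨l.get ∘ Fintype.equivFinOfCardEq hl, ?_⟩
  rw [← Multiset.map_map, Multiset.map_univ_val_equiv, Fin.univ_val_map, List.ofFn_get]
  rfl

theorem exists_aeval_esymm_eq (R : Type*) {K : Type*} [CommRing R] [Field K] [IsAlgClosed K]
    [Algebra R K] {n : ℕ} (hσ : Fintype.card σ = n) (c : Fin n → K) :
    ∃ x : σ → K, ∀ i : Fin n, aeval x (esymm σ R (i + 1)) = c i := by
  classical
  let q : Polynomial K := Polynomial.X ^ n + Polynomial.ofFn n (c ∘ Fin.rev)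
  have hdeg : (Polynomial.ofFn n (c ∘ Fin.rev)).degree < n := Polynomial.ofFn_degree_lt _
  have hsplits : q.Splits := IsAlgClosed.splits q
  have hmonic : q.Monic := Polynomial.monic_X_pow_add hdeg
  have hcard : (q.roots.map Neg.neg).card = n := by
    rw [Multiset.card_map, ← hsplits.natDegree_eq_card_roots]
    refine Polynomial.natDegree_eq_of_degree_eq_some ?_
    rw [Polynomial.degree_add_eq_left_of_degree_lt] <;> simp [hdeg]
  have hprod : ((q.roots.map Neg.neg).map fun r ↦ Polynomial.X + Polynomial.C r).prod = q := by
    conv_rhs => rw [hsplits.eq_prod_roots_of_monic hmonic]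
    simp only [Multiset.map_map, Function.comp_def, map_neg, ← sub_eq_add_neg]
  obtain ⟨x, hx⟩ := exists_univ_val_map_eq (hcard.trans hσ.symm)
  refine ⟨x, fun i ↦ ?_⟩
  have hi : n - (i.rev : ℕ) = i + 1 := by rw [Fin.val_rev]; lia
  calc aeval x (esymm σ R (i + 1))
      = (q.roots.map Neg.neg).esymm (n - i.rev) := by
        rw [aeval_esymm_eq_multiset_esymm, hx, hi]
    _ = q.coeff i.rev := by
        rw [← hprod, Multiset.prod_X_add_C_coeff _ (by lia), hprod, hcard]
    _ = c i := by
        rw [Polynomial.coeff_add, Polynomial.coeff_X_pow, if_neg i.rev.is_lt.ne, zero_add,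
          Polynomial.ofFn_coeff_eq_val_of_lt _ i.rev.is_lt, Fin.eta, Function.comp_apply,
          Fin.rev_rev]

theorem mem_span_esymm_of_forall_aeval_eq_zero {R K : Type*} [CommRing R] [Field K]
    [IsAlgClosed K] [Algebra R K] [FaithfulSMul R K] {n : ℕ} (hσ : Fintype.card σ = n)
    {S : Set (Fin n)} {p : MvPolynomial σ R} (hp : p.IsSymmetric)
    (h : ∀ x : σ → K, (∀ i ∈ S, aeval x (esymm σ R (i + 1)) = 0) → aeval x p = 0) :
    p ∈ Ideal.span ((fun i : Fin n ↦ esymm σ R (i + 1)) '' S) := by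
  have : Infinite K := IsAlgClosed.instInfinite
  obtain ⟨q, hq⟩ := esymmAlgHom_surjective R hσ.le ⟨p, hp⟩
  have hqp : aeval (fun i : Fin n ↦ esymm σ R (i + 1)) q = p := by
    rw [← esymmAlgHom_apply, hq]
  have hqS : q ∈ Ideal.span (X '' S) := by
    refine mem_span_X_image_of_forall_aeval_eq_zero (K := K) fun c hc ↦ ?_
    obtain ⟨x, hx⟩ := exists_aeval_esymm_eq R hσ c
    have hqc : aeval c q = aeval x p := by
      simp only [← hqp, comp_aeval_apply, hx]
    rw [hqc]
    exact h x fun i hi ↦ (hx i).trans (hc i hi)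
  have hmap := Ideal.mem_map_of_mem (aeval fun i : Fin n ↦ esymm σ R (i + 1)) hqS
  simpa only [hqp, Ideal.map_span, Set.image_image, aeval_X] using hmap

theorem prod_add_eq_sum_aeval_esymm (R : Type*) {A : Type*} [CommRing R] [CommRing A]
    [Algebra R A] (x : σ → A) (y : A) :
    ∏ i, (y + x i) = ∑ j ∈ range (Fintype.card σ + 1),
      aeval x (esymm σ R j) * y ^ (Fintype.card σ - j) := by
  have h := congrArg (Polynomial.eval y) (Multiset.prod_X_add_C_eq_sum_esymm (univ.val.map x))
  simpa [← prod_eq_multiset_prod, Polynomial.eval_prod, Polynomial.eval_finsetSum,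
    aeval_esymm_eq_multiset_esymm] using h

end Esymm

section PairProducts

variable {ι M : Type*} [Fintype ι] [LinearOrder ι] [CommMonoid M]

theorem prod_filter_lt_eq_prod_sym2 (f : Sym2 ι → M) :
    ∏ p : ι × ι with p.1 < p.2, f s(p.1, p.2) = ∏ z : Sym2 ι with ¬ z.IsDiag, f z := by
  refine prod_nbij' (fun p ↦ s(p.1, p.2)) (fun z ↦ (z.inf, z.sup)) ?_ ?_ ?_ ?_ ?_
  · simp +contextual [ne_of_lt]
  · rintro ⟨i, j⟩
    simp [eq_comm]
  · simp +contextual [le_of_lt]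
  · rintro ⟨i, j⟩
    simp [le_total]
  · simp

theorem prod_filter_lt_comp_perm (f : Sym2 ι → M) (τ : Equiv.Perm ι) :
    ∏ p : ι × ι with p.1 < p.2, f s(τ p.1, τ p.2) =
      ∏ p : ι × ι with p.1 < p.2, f s(p.1, p.2) := by
  have hmap := prod_filter_lt_eq_prod_sym2 fun z ↦ f (z.map τ)
  simp only [Sym2.map_mk] at hmap
  rw [hmap, prod_filter_lt_eq_prod_sym2]
  refine prod_nbij' (Sym2.map τ) (Sym2.map τ.symm) ?_ ?_ ?_ ?_ ?_ <;>
    simp [Sym2.isDiag_map, τ.injective, τ.symm.injective, Sym2.map_map]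

theorem prod_prod_eq_sq_prod_filter_lt {f : ι → ι → M} (hf : ∀ i j, f i j = f j i)
    (hdiag : ∀ i, f i i = 1) :
    ∏ i, ∏ j, f i j = (∏ p : ι × ι with p.1 < p.2, f p.1 p.2) ^ 2 := by
  have hdrop : ∏ p : ι × ι with p.2 < p.1, f p.1 p.2 = ∏ p : ι × ι with ¬ p.1 < p.2, f p.1 p.2 := by
    refine prod_subset (fun p ↦ by simpa using le_of_lt) fun p hle hlt ↦ ?_
    simp only [mem_filter_univ, not_lt] at hle hlt
    rw [le_antisymm hlt hle, hdiag]
  have hswap : ∏ p : ι × ι with p.2 < p.1, f p.1 p.2 = ∏ p : ι × ι with p.1 < p.2, f p.1 p.2 :=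
    prod_nbij' Prod.swap Prod.swap (by simp) (by simp) (by simp) (by simp) (by simp [hf])
  rw [← Fintype.prod_prod_type', ← prod_filter_mul_prod_filter_not univ fun p : ι × ι ↦ p.1 < p.2,
    ← hdrop, hswap, sq]

end PairProducts

section LambdaTwoClass

variable {ι A : Type*} [Fintype ι] [LinearOrder ι]

/-- The total Stiefel–Whitney class `∏_{j<k} (1 + xⱼ + xₖ)` of the second exterior power of a sum
of line bundles with first Stiefel–Whitney classes `xᵢ`. The order on `ι` only serves to pick one
representative of each unordered pair. -/
def lambdaTwoClass [CommSemiring A] (x : ι → A) : A :=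
  ∏ p : ι × ι with p.1 < p.2, (1 + x p.1 + x p.2)

theorem map_lambdaTwoClass {B F : Type*} [CommSemiring A] [CommSemiring B] [FunLike F A B]
    [RingHomClass F A B] (φ : F) (x : ι → A) :
    φ (lambdaTwoClass x) = lambdaTwoClass (φ ∘ x) := by
  simp only [lambdaTwoClass, map_prod, map_add, map_one, Function.comp_apply]

theorem lambdaTwoClass_comp_perm [CommSemiring A] (x : ι → A) (τ : Equiv.Perm ι) :
    lambdaTwoClass (x ∘ τ) = lambdaTwoClass x :=
  prod_filter_lt_comp_perm
    (Sym2.lift ⟨fun i j ↦ 1 + x i + x j, fun i j ↦ add_right_comm 1 (x i) (x j)⟩) τ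

theorem isSymmetric_lambdaTwoClass_X (R : Type*) [CommSemiring R] :
    (lambdaTwoClass (X : ι → MvPolynomial ι R)).IsSymmetric := fun τ ↦ by
  have hX : rename τ ∘ (X : ι → MvPolynomial ι R) = X ∘ τ := _root_.funext (rename_X τ)
  rw [map_lambdaTwoClass, hX, lambdaTwoClass_comp_perm]

theorem lambdaTwoClass_sq [CommRing A] [CharP A 2] (x : ι → A) :
    lambdaTwoClass x ^ 2 = ∏ i, ∏ j, (1 + x i + x j) := by
  refine (prod_prod_eq_sq_prod_filter_lt (fun i j ↦ add_right_comm 1 (x i) (x j)) fun i ↦ ?_).symm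
  rw [add_assoc, CharTwo.add_self_eq_zero, add_zero]

theorem lambdaTwoClass_sq_of_prod_add_eq [CommRing A] [CharP A 2] {x : ι → A} {a b u : A}
    (hx : ∀ y, ∏ i, (y + x i) = y ^ 6 + a * y ^ 2 + b) (hu : u ^ 4 + u ^ 2 + 1 + a = 0) :
    lambdaTwoClass x ^ 2 = ((1 + a + b) ^ 2) ^ 2 := by
  have hroot (i : ι) : x i ^ 6 + a * x i ^ 2 + b = 0 := by
    rw [← hx, prod_eq_zero (mem_univ i) (CharTwo.add_self_eq_zero _)]
  have hadd (y : A) : (1 + y) ^ 6 + a * (1 + y) ^ 2 + b =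
      y ^ 6 + a * y ^ 2 + b + (y ^ 4 + y ^ 2 + 1 + a) := by
    grind
  have hfactor (y : A) : y ^ 4 + y ^ 2 + 1 + a = (u + y) ^ 2 * (u + 1 + y) ^ 2 := by
    grind
  have hshift (i : ι) : ∏ j, (1 + x i + x j) = (u + x i) ^ 2 * (u + 1 + x i) ^ 2 := by
    rw [hx, hadd, hroot, zero_add, hfactor]
  have hfu : u ^ 6 + a * u ^ 2 + b = 1 + a + b := by
    linear_combination (u ^ 2 - 1) * hu
  have hfu' : (u + 1) ^ 6 + a * (u + 1) ^ 2 + b = 1 + a + b := by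
    rw [add_comm u, hadd, hu, add_zero, hfu]
  calc lambdaTwoClass x ^ 2
      = (∏ i, (u + x i)) ^ 2 * (∏ i, (u + 1 + x i)) ^ 2 := by
        simp only [lambdaTwoClass_sq, hshift, prod_mul_distrib, prod_pow]
    _ = ((1 + a + b) ^ 2) ^ 2 := by
        rw [hx, hx, hfu, hfu']
        ring

theorem lambdaTwoClass_eq_of_prod_add_eq {K : Type*} [Field K] [IsAlgClosed K] [CharP K 2]
    {x : ι → K} {a b : K} (hx : ∀ y, ∏ i, (y + x i) = y ^ 6 + a * y ^ 2 + b) :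
    lambdaTwoClass x = (1 + a + b) ^ 2 := by
  let g : Polynomial K := Polynomial.X ^ 4 + Polynomial.X ^ 2 + 1 + Polynomial.C a
  have hg : g.degree = 4 := by
    unfold g
    compute_degree!
  obtain ⟨u, hu⟩ : ∃ u, g.IsRoot u := IsAlgClosed.exists_root g (by simp [hg])
  exact CharTwo.sq_inj.mp (lambdaTwoClass_sq_of_prod_add_eq hx (by simpa [g] using hu))

theorem lambdaTwoClass_eq_of_esymm_eq_zero {R K : Type*} [CommRing R] [Field K] [IsAlgClosed K]
    [CharP K 2] [Algebra R K] {x : Fin 6 → K}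
    (h₁ : aeval x (esymm (Fin 6) R 1) = 0) (h₂ : aeval x (esymm (Fin 6) R 2) = 0)
    (h₃ : aeval x (esymm (Fin 6) R 3) = 0) (h₅ : aeval x (esymm (Fin 6) R 5) = 0) :
    lambdaTwoClass x =
      (1 + aeval x (esymm (Fin 6) R 4) + aeval x (esymm (Fin 6) R 6)) ^ 2 := by
  refine lambdaTwoClass_eq_of_prod_add_eq fun y ↦ ?_
  rw [prod_add_eq_sum_aeval_esymm R, Fintype.card_fin]
  simp only [sum_range_succ, range_zero, sum_empty, esymm_zero, map_one, h₁, h₂, h₃, h₅]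
  ring

end LambdaTwoClass

/-- in `𝔽₂[t₁,…,t₆]`, `∏_{1≤j<k≤6} (1 + t_j + t_k)` is congruent
to `(1 + e₄ + e₆)²` modulo the ideal `(e₁, e₂, e₃, e₅)`. -/
theorem lambda2_spin6 :
    (∏ p ∈ univ.filter (fun p : Fin 6 × Fin 6 => p.1 < p.2),
        (1 + X p.1 + X p.2) : MvPolynomial (Fin 6) (ZMod 2))
      - (1 + e 4 + e 6) ^ 2 ∈ Ideal.span {e 1, e 2, e 3, e 5} := by
  let K := AlgebraicClosure (ZMod 2)
  have : CharP K 2 := charP_of_injective_algebraMap (algebraMap (ZMod 2) K).injective 2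
  have hsymm : (lambdaTwoClass X - (1 + e 4 + e 6) ^ 2).IsSymmetric :=
    (isSymmetric_lambdaTwoClass_X _).sub <| (symmetricSubalgebra _ _).pow_mem
      ((IsSymmetric.one.add (esymm_isSymmetric _ _ 4)).add (esymm_isSymmetric _ _ 6)) 2
  have hgen : (fun i : Fin 6 ↦ esymm (Fin 6) (ZMod 2) (i + 1)) '' {0, 1, 2, 4} =
      {e 1, e 2, e 3, e 5} := by
    simp only [Set.image_insert_eq, Set.image_singleton]
    rfl
  rw [← hgen]
  refine mem_span_esymm_of_forall_aeval_eq_zero (K := K) (Fintype.card_fin 6) hsymm fun x hx ↦ ?_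
  have hX : aeval x ∘ X = x := _root_.funext (aeval_X (R := ZMod 2) x)
  have hclass : lambdaTwoClass x = (1 + aeval x (e 4) + aeval x (e 6)) ^ 2 :=
    lambdaTwoClass_eq_of_esymm_eq_zero (hx 0 (by simp)) (hx 1 (by simp)) (hx 2 (by simp))
      (hx 4 (by simp))
  change aeval x (lambdaTwoClass X - (1 + e 4 + e 6) ^ 2) = 0
  rw [map_sub, map_lambdaTwoClass, hX, hclass, sub_eq_zero]
  simp only [map_pow, map_add, map_one]
end

section
/- In 𝔽₂[t₁,…,t₆], the product over all 3-element subsets S of {1,…,6} of (1 + Σ_{i∈S} t_i) is congruent to 1 + e₂² + e₃² + (e₄² + e₂⁴) + e₅² + (e₆² + e₃⁴ + e₂⁶) + e₂⁴e₃² + (e₃²e₅² + e₂⁴e₄² + e₂²e₃⁴) + (e₂⁴e₅² + e₃⁶) + (e₅⁴ + e₂⁴e₆² + e₂²e₃²e₅² + e₃⁴e₄²) modulo the ideal generated by e₁. -/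
/-!
The Chern roots of `λᵏ(V)` are the sums of `k` of the roots of `V`, so splitting off a line bundle
gives `λᵏ⁺¹(V ⊕ A) = λᵏ⁺¹(V) ⊕ λᵏ(V) ⊗ A`, and passing to complements gives
`λᵏ(V) = λˡ(V*) ⊗ det V` when `V` has rank `k + l`. Modulo `2` duals are invisible, so if `V ⊕ A`
has rank `6` and trivial determinant, both facts together show that `c(λ³(V ⊕ A))` is the square
of `c(λ²(V) ⊗ A)`. Splitting off a further line bundle `B` from `V = W ⊕ B` turns this square root
into `c(λ²(W) ⊗ A) c(W ⊗ A ⊗ B)` with `W` of rank `4`. The second factor is given by Vieta's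
formula. In the first, the six roots of `λ²(W)` form three complementary pairs `x, y` with
`x + y = e₁(W)`, and `(u + x)(u + y) = u(u + e₁) + xy`, so it is a value of the resolvent cubic,
whose roots are the three products `-xy`. Squaring is additive modulo `2`, which gives the stated
formula.
-/

open MvPolynomial Finset

section CommSemiring

variable {R S : Type*} [CommSemiring R] [CommSemiring S]

lemma esymm_zero_right (s : Multiset R) : s.esymm 0 = 1 := by
  simp [Multiset.esymm]

lemma esymm_one_right (s : Multiset R) : s.esymm 1 = s.sum := by
  simp [Multiset.esymm, Multiset.powersetCard_one, Multiset.map_map]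

lemma esymm_eq_zero_of_card_lt {s : Multiset R} {k : ℕ} (h : s.card < k) : s.esymm k = 0 := by
  simp [Multiset.esymm, Multiset.powersetCard_eq_empty k h]

lemma esymm_zero_succ (k : ℕ) : (0 : Multiset R).esymm (k + 1) = 0 :=
  esymm_eq_zero_of_card_lt (by simp)

lemma esymm_cons_succ (a : R) (s : Multiset R) (k : ℕ) :
    (a ::ₘ s).esymm (k + 1) = s.esymm (k + 1) + a * s.esymm k := by
  simp [Multiset.esymm, Multiset.powersetCard_cons, Multiset.map_map, Multiset.sum_map_mul_left]

lemma esymm_map (f : R →+* S) (s : Multiset R) (k : ℕ) :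
    (s.map f).esymm k = f (s.esymm k) := by
  simp [Multiset.esymm, Multiset.powersetCard_map, Multiset.map_map, map_multiset_sum,
    map_multiset_prod]

/-- The total Chern class of `λᵏ(V) ⊗ L`, where `s` is the multiset of Chern roots of the vector
bundle `V`, and the line bundle `L` has total Chern class `u`. -/
def lambdaChern (k : ℕ) (u : R) (s : Multiset R) : R :=
  ((s.powersetCard k).map fun t => u + t.sum).prod

lemma lambdaChern_zero_left (u : R) (s : Multiset R) : lambdaChern 0 u s = u := by
  simp [lambdaChern]

lemma lambdaChern_succ_zero (k : ℕ) (u : R) : lambdaChern (k + 1) u 0 = 1 := by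
  simp [lambdaChern, Multiset.powersetCard_zero_right]

lemma lambdaChern_card (u : R) (s : Multiset R) : lambdaChern s.card u s = u + s.sum := by
  simp [lambdaChern, Multiset.powersetCard_self]

lemma lambdaChern_succ_cons (k : ℕ) (u a : R) (s : Multiset R) :
    lambdaChern (k + 1) u (a ::ₘ s) = lambdaChern (k + 1) u s * lambdaChern k (u + a) s := by
  simp [lambdaChern, Multiset.powersetCard_cons, Multiset.map_map, add_assoc]

lemma lambdaChern_map (f : R →+* S) (k : ℕ) (u : R) (s : Multiset R) :
    lambdaChern k (f u) (s.map f) = f (lambdaChern k u s) := by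
  simp [lambdaChern, Multiset.powersetCard_map, Multiset.map_map, map_multiset_sum,
    map_multiset_prod]

lemma lambdaChern_map_val {σ : Type*} (k : ℕ) (u : R) (s : Finset σ) (t : σ → R) :
    lambdaChern k u (s.val.map t) = ∏ A ∈ s.powersetCard k, (u + ∑ i ∈ A, t i) := by
  simp only [lambdaChern, Multiset.powersetCard_map, Multiset.map_map, Finset.prod,
    ← Finset.map_val_val_powersetCard]
  rfl

lemma lambdaChern_one_eq_sum_esymm (u : R) (s : Multiset R) :
    lambdaChern 1 u s = ∑ j ∈ range (s.card + 1), s.esymm j * u ^ (s.card - j) := by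
  have vieta := congrArg (Polynomial.eval u) s.prod_X_add_C_eq_sum_esymm
  simpa [lambdaChern, Multiset.powersetCard_one, Multiset.map_map, Polynomial.eval_multiset_prod,
    Polynomial.eval_finsetSum] using vieta

/-- The polynomial in the Chern classes `c i` of a rank `6` bundle with `c 1 = 0` whose square is
the mod `2` total Chern class of the third exterior power. -/
def sqrtChernLambdaThree (c : ℕ → R) : R :=
  1 + c 2 + c 3 + (c 4 + c 2 ^ 2) + c 5 + (c 6 + c 3 ^ 2 + c 2 ^ 3) + c 2 ^ 2 * c 3
    + (c 3 * c 5 + c 2 ^ 2 * c 4 + c 2 * c 3 ^ 2) + (c 2 ^ 2 * c 5 + c 3 ^ 3)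
    + (c 5 ^ 2 + c 2 ^ 2 * c 6 + c 2 * c 3 * c 5 + c 3 ^ 2 * c 4)

end CommSemiring

section CommRing

variable {R : Type*} [CommRing R]

lemma lambdaChern_eq_lambdaChern_map_neg {k l : ℕ} (u : R) {s : Multiset R}
    (h : s.card = k + l) : lambdaChern k u s = lambdaChern l (u + s.sum) (s.map Neg.neg) := by
  induction s using Multiset.induction_on generalizing k l u with
  | empty =>
    obtain ⟨rfl, rfl⟩ : k = 0 ∧ l = 0 := by simpa [eq_comm] using h
    simp [lambdaChern_zero_left]
  | cons a s ih =>
    match k, l with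
    | 0, l =>
      obtain rfl : l = ((a ::ₘ s).map Neg.neg).card := by simpa using h.symm
      rw [lambdaChern_zero_left, lambdaChern_card, Multiset.sum_map_neg', add_neg_cancel_right]
    | k + 1, 0 =>
      rw [lambdaChern_zero_left, ← lambdaChern_card, h, add_zero]
    | k + 1, l + 1 =>
      rw [Multiset.card_cons] at h
      rw [Multiset.map_cons, lambdaChern_succ_cons, lambdaChern_succ_cons, Multiset.sum_cons,
        ih (k := k + 1) (l := l) u (by omega), ih (k := k) (l := l + 1) (u + a) (by omega),
        mul_comm]
      congr 2 <;> ring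

lemma lambdaChern_two_of_card_eq_four (u : R) {s : Multiset R} (hs : s.card = 4) :
    lambdaChern 2 u s =
      (u * (u + s.sum)) ^ 3 + 2 * s.esymm 2 * (u * (u + s.sum)) ^ 2
        + (s.esymm 2 ^ 2 + s.sum * s.esymm 3 - 4 * s.esymm 4) * (u * (u + s.sum))
        + (s.sum * s.esymm 2 * s.esymm 3 - s.sum ^ 2 * s.esymm 4 - s.esymm 3 ^ 2) := by
  obtain ⟨w, x, y, z, rfl⟩ := Multiset.card_eq_four.mp hs
  have resolvent : lambdaChern 2 u {w, x, y, z} =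
      (u * (u + (w + x + y + z)) + (w + x) * (y + z)) *
        (u * (u + (w + x + y + z)) + (w + y) * (x + z)) *
        (u * (u + (w + x + y + z)) + (w + z) * (x + y)) := by
    simp only [Multiset.insert_eq_cons, ← Multiset.cons_zero, lambdaChern_succ_cons,
      lambdaChern_zero_left, lambdaChern_succ_zero]
    ring
  rw [resolvent]
  simp only [Multiset.insert_eq_cons, ← Multiset.cons_zero, Multiset.sum_cons, Multiset.sum_zero,
    esymm_cons_succ, esymm_zero_right, esymm_zero_succ]
  ring

end CommRing

section CharTwo

variable {R : Type*} [CommRing R] [CharP R 2]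

lemma lambdaChern_succ_cons_eq_sq {k : ℕ} (u : R) {a : R} {s : Multiset R}
    (hs : s.card = 2 * k + 1) (h : (a ::ₘ s).sum = 0) :
    lambdaChern (k + 1) u (a ::ₘ s) = lambdaChern k (u + a) s ^ 2 := by
  have hsum : s.sum = a := by
    rwa [Multiset.sum_cons, CharTwo.add_eq_zero, eq_comm] at h
  have hcard : s.card = (k + 1) + k := by omega
  rw [lambdaChern_succ_cons, lambdaChern_eq_lambdaChern_map_neg u hcard, hsum, CharTwo.neg_eq',
    Multiset.map_id, sq]

lemma lambdaChern_two_one_add {a : R} {s : Multiset R} (hs : s.card = 5)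
    (h : (a ::ₘ s).sum = 0) :
    lambdaChern 2 (1 + a) s = sqrtChernLambdaThree (a ::ₘ s).esymm := by
  obtain ⟨b, r, rfl, hr⟩ := Multiset.card_eq_succ_iff.mp hs
  have hsum : r.sum = a + b := by
    rw [Multiset.sum_cons, Multiset.sum_cons, ← add_assoc, CharTwo.add_eq_zero] at h
    exact h.symm
  have quartic : lambdaChern 1 (1 + a + b) r = (1 + a + b) ^ 3 + r.esymm 2 * (1 + a + b) ^ 2
      + r.esymm 3 * (1 + a + b) + r.esymm 4 := by
    simp only [lambdaChern_one_eq_sum_esymm, hr, sum_range_succ, sum_range_zero, esymm_zero_right,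
      esymm_one_right, hsum]
    grind
  have sextic : lambdaChern 2 (1 + a) r = ((1 + a) * (1 + b)) ^ 3
      + (r.esymm 2 ^ 2 + (a + b) * r.esymm 3) * ((1 + a) * (1 + b))
      + ((a + b) * r.esymm 2 * r.esymm 3 + (a + b) ^ 2 * r.esymm 4 + r.esymm 3 ^ 2) := by
    rw [lambdaChern_two_of_card_eq_four _ hr, hsum]
    grind
  have esymm_five : r.esymm 5 = 0 := esymm_eq_zero_of_card_lt (by omega)
  have esymm_six : r.esymm 6 = 0 := esymm_eq_zero_of_card_lt (by omega)
  rw [lambdaChern_succ_cons, quartic, sextic]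
  simp only [sqrtChernLambdaThree, esymm_cons_succ, esymm_one_right, Multiset.sum_cons, hsum,
    esymm_five, esymm_six]
  grind

lemma sqrtChernLambdaThree_sq (c : ℕ → R) :
    sqrtChernLambdaThree c ^ 2 =
      1 + c 2 ^ 2 + c 3 ^ 2 + (c 4 ^ 2 + c 2 ^ 4) + c 5 ^ 2
        + (c 6 ^ 2 + c 3 ^ 4 + c 2 ^ 6)
        + c 2 ^ 4 * c 3 ^ 2
        + (c 3 ^ 2 * c 5 ^ 2 + c 2 ^ 4 * c 4 ^ 2 + c 2 ^ 2 * c 3 ^ 4)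
        + (c 2 ^ 4 * c 5 ^ 2 + c 3 ^ 6)
        + (c 5 ^ 4 + c 2 ^ 4 * c 6 ^ 2 + c 2 ^ 2 * c 3 ^ 2 * c 5 ^ 2 + c 3 ^ 4 * c 4 ^ 2) := by
  simp only [sqrtChernLambdaThree, CharTwo.add_sq]
  ring

lemma lambdaChern_three_of_card_eq_six {s : Multiset R} (hs : s.card = 6) (h : s.sum = 0) :
    lambdaChern 3 1 s = sqrtChernLambdaThree s.esymm ^ 2 := by
  obtain ⟨a, t, rfl, ht⟩ := Multiset.card_eq_succ_iff.mp hs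
  rw [lambdaChern_succ_cons_eq_sq (k := 2) 1 ht h, lambdaChern_two_one_add ht h]

theorem chern_lambda3_SU6_general {s : Multiset R} (hs : s.card = 6) :
    lambdaChern 3 1 s - sqrtChernLambdaThree s.esymm ^ 2 ∈ Ideal.span {s.sum} := by
  let π := Ideal.Quotient.mk (Ideal.span {s.sum})
  rw [← Ideal.Quotient.mk_eq_mk_iff_sub_mem]
  rcases subsingleton_or_nontrivial (R ⧸ Ideal.span {s.sum}) with _ | _
  · exact Subsingleton.elim _ _
  have : CharP (R ⧸ Ideal.span {s.sum}) 2 := CharTwo.of_one_ne_zero_of_two_eq_zero one_ne_zero <| by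
    rw [← map_ofNat π 2, CharTwo.two_eq_zero, map_zero]
  have hsum : (s.map π).sum = 0 := by
    rw [← map_multiset_sum]
    exact Ideal.Quotient.eq_zero_iff_mem.mpr (Ideal.mem_span_singleton_self _)
  calc π (lambdaChern 3 1 s) = lambdaChern 3 1 (s.map π) := by rw [← lambdaChern_map, map_one]
    _ = sqrtChernLambdaThree (s.map π).esymm ^ 2 :=
      lambdaChern_three_of_card_eq_six ((s.card_map π).trans hs) hsum
    _ = π (sqrtChernLambdaThree s.esymm ^ 2) := by simp [sqrtChernLambdaThree, esymm_map]

end CharTwo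

/-- in `𝔽₂[t₁,…,t₆]`, the product over all 3-element subsets `S`
of `{1,…,6}` of `(1 + Σ_{i∈S} t_i)` is congruent to the displayed polynomial
in `e₂,…,e₆` modulo the ideal `(e₁)`; this is the mod 2 total Chern class of
`λ³ : SU(6) → SU(20)`. -/
theorem chern_lambda3_SU6 :
    (∏ s ∈ (univ : Finset (Fin 6)).powersetCard 3,
        (1 + ∑ i ∈ s, X i) : MvPolynomial (Fin 6) (ZMod 2))
      - (1 + e 2 ^ 2 + e 3 ^ 2 + (e 4 ^ 2 + e 2 ^ 4) + e 5 ^ 2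
          + (e 6 ^ 2 + e 3 ^ 4 + e 2 ^ 6)
          + e 2 ^ 4 * e 3 ^ 2
          + (e 3 ^ 2 * e 5 ^ 2 + e 2 ^ 4 * e 4 ^ 2 + e 2 ^ 2 * e 3 ^ 4)
          + (e 2 ^ 4 * e 5 ^ 2 + e 3 ^ 6)
          + (e 5 ^ 4 + e 2 ^ 4 * e 6 ^ 2 + e 2 ^ 2 * e 3 ^ 2 * e 5 ^ 2
              + e 3 ^ 4 * e 4 ^ 2))
      ∈ Ideal.span {e 1} := by
  simpa only [e, lambdaChern_map_val, sqrtChernLambdaThree_sq, ← esymm_one_right,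
    ← esymm_eq_multiset_esymm] using
    chern_lambda3_SU6_general (R := MvPolynomial (Fin 6) (ZMod 2)) (s := univ.val.map X) rfl
end

section
/- In 𝔽₂[t₁,…,t₆], let Q be the product of ∏_{1≤j<k≤6}(1 + t_j + t_k) and ∏_{|S|=4, S⊆{1,…,6}}(1 + Σ_{i∈S} t_i). Then the homogeneous component of Q of degree 16 is congruent to e₃²e₅² + e₄⁴ + e₂⁸ modulo the ideal generated by e₁. -/
open MvPolynomial Finset

/-- `Q`: the product of `∏_{1≤j<k≤6}(1 + t_j + t_k)` and
`∏_{|S|=4}(1 + Σ_{i∈S} t_i)` in `𝔽₂[t₁,…,t₆]`, representing the mod 2 total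
Chern class of `2 ⊕ λ² ⊕ λ⁴ = r̃₆*((Δ₁₂⁺)_ℂ)` of `SU(6)`. -/
noncomputable def Q : MvPolynomial (Fin 6) (ZMod 2) :=
  (∏ p ∈ univ.filter (fun p : Fin 6 × Fin 6 => p.1 < p.2), (1 + X p.1 + X p.2)) *
  ∏ s ∈ (univ : Finset (Fin 6)).powersetCard 4, (1 + ∑ i ∈ s, X i)

/-! Modulo `e₁`, complementary subsets of the roots have equal sums in characteristic two, so the
`λ⁴` factor of `Q` equals the `λ²` factor `A` and `Q ≡ A²`. Adding the trivial diagonal,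
`A² = ∏ᵢ ∏ⱼ (1 + tᵢ + tⱼ) = ∏ᵢ f(1 + tᵢ)` with `f(T) = ∏ⱼ (T + tⱼ)`, the resultant of `f(T)` and
`f(T + 1)`. Since `f(T + 1) - f(T)` is a quadratic in `w = T² + T` and `f` reduces modulo it to a
linear polynomial in `w`, this resultant is the square of the resultant of a quadratic and a linear
polynomial, that is of `γ² + e₃αγ + cα²` for explicit `α`, `γ`, `c`. The latter is
`1 + (e₃e₅ + e₄² + e₂⁴)` up to terms of degree at least `9`; squaring in characteristic two gives
the component of degree `16`. -/

section PairProducts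

variable {ι M : Type*} [Fintype ι] [LinearOrder ι] [CommMonoid M]

lemma prod_filter_lt_eq_prod_powersetCard_two (f : Finset ι → M) :
    ∏ p : ι × ι with p.1 < p.2, f {p.1, p.2} = ∏ s ∈ univ.powersetCard 2, f s := by
  refine prod_nbij (fun p ↦ {p.1, p.2}) ?_ ?_ ?_ fun _ _ ↦ rfl
  · intro p hp
    simpa using card_pair (mem_filter.1 hp).2.ne
  · rintro ⟨a, b⟩ hab ⟨c, d⟩ hcd h
    simp only [coe_filter, mem_univ, true_and, Set.mem_ofPred_eq] at hab hcd h
    rw [← coe_inj, coe_pair, coe_pair, Set.pair_eq_pair_iff] at h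
    grind
  · intro s hs
    obtain ⟨a, b, hab, rfl⟩ := card_eq_two.1 (mem_powersetCard.1 hs).2
    rcases hab.lt_or_gt with h | h
    · exact ⟨(a, b), by simpa using h, rfl⟩
    · exact ⟨(b, a), by simpa using h, pair_comm b a⟩

lemma prod_prod_eq_prod_diag_mul_prod_filter_lt_sq (f : ι → ι → M) (hf : ∀ i j, f i j = f j i) :
    ∏ i, ∏ j, f i j = (∏ i, f i i) * (∏ p : ι × ι with p.1 < p.2, f p.1 p.2) ^ 2 := by
  have hgt : ∏ p : ι × ι with p.2 < p.1, f p.1 p.2 = ∏ p : ι × ι with p.1 < p.2, f p.1 p.2 :=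
    prod_nbij' Prod.swap Prod.swap (by simp) (by simp) (by simp) (by simp) fun p _ ↦ hf _ _
  have hdiag : ∏ p : ι × ι with p.1 = p.2, f p.1 p.2 = ∏ i, f i i :=
    prod_nbij' Prod.fst (fun i ↦ (i, i)) (by simp) (by simp) (by simp +contextual [Prod.ext_iff])
      (by simp) (by simp +contextual)
  rw [← Fintype.prod_prod_type' f, ← hdiag, sq]
  nth_rw 2 [← hgt]
  simp only [prod_filter, ← prod_mul_distrib]
  refine prod_congr rfl fun p _ ↦ ?_
  rcases lt_trichotomy p.1 p.2 with h | h | h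
  · simp [h, h.ne, h.not_gt]
  · simp [h]
  · simp [h, h.ne', h.not_gt]

end PairProducts

section ExteriorPowers

variable {ι R : Type*} [Fintype ι] [CommRing R]

/-- The total Chern class `∏_{|S| = k} (1 + ∑_{i ∈ S} t i)` of the `k`-th exterior power of a bundle
with Chern roots `t`. -/
def exteriorPowerClass (t : ι → R) (k : ℕ) : R :=
  ∏ s ∈ (univ : Finset ι).powersetCard k, (1 + ∑ i ∈ s, t i)

lemma exteriorPowerClass_two [LinearOrder ι] (t : ι → R) :
    exteriorPowerClass t 2 = ∏ p : ι × ι with p.1 < p.2, (1 + t p.1 + t p.2) := by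
  rw [exteriorPowerClass, ← prod_filter_lt_eq_prod_powersetCard_two]
  refine prod_congr rfl fun p hp ↦ ?_
  rw [sum_pair (mem_filter.1 hp).2.ne, add_assoc]

lemma map_exteriorPowerClass {S : Type*} [CommRing S] (φ : R →+* S) (t : ι → R) (k : ℕ) :
    φ (exteriorPowerClass t k) = exteriorPowerClass (φ ∘ t) k := by
  simp [exteriorPowerClass]

variable [CharP R 2]

lemma exteriorPowerClass_eq_of_add_eq_card {t : ι → R} (ht : ∑ i, t i = 0) {k l : ℕ}
    (hkl : k + l = Fintype.card ι) : exteriorPowerClass t k = exteriorPowerClass t l := by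
  classical
  refine prod_nbij' compl compl ?_ ?_ (by simp) (by simp) fun s _ ↦ ?_
  · grind [card_compl]
  · grind [card_compl]
  · have : ∑ i ∈ s, t i = ∑ i ∈ sᶜ, t i := by
      rw [← CharTwo.add_eq_zero, sum_add_sum_compl, ht]
    rw [this]

lemma exteriorPowerClass_two_sq [LinearOrder ι] (t : ι → R) :
    exteriorPowerClass t 2 ^ 2 = ∏ i, ∏ j, (1 + t i + t j) := by
  rw [prod_prod_eq_prod_diag_mul_prod_filter_lt_sq _ fun i j ↦ add_right_comm _ _ _,
    exteriorPowerClass_two]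
  simp only [add_assoc, CharTwo.add_self_eq_zero, add_zero, prod_const_one, one_mul]

end ExteriorPowers

section RingExtensions

open Polynomial (eval₂)

universe u

variable {R : Type u} [CommRing R]

lemma exists_injective_eval₂_eq_zero_of_monic [Nontrivial R] {p : Polynomial R} (hp : p.Monic)
    (hdeg : p.natDegree ≠ 0) :
    ∃ (S : Type u) (_ : CommRing S) (φ : R →+* S),
      Function.Injective φ ∧ ∃ x, eval₂ φ x p = 0 := by
  obtain ⟨S, _, _, _, _, _, hS⟩ := hp.exists_splits_map
  obtain ⟨x, hx⟩ := hS.exists_eval_eq_zero <| Polynomial.degree_ne_of_natDegree_ne <| by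
    rwa [hp.natDegree_map]
  exact ⟨S, _, algebraMap R S, FaithfulSMul.algebraMap_injective R S, x,
    by rwa [← Polynomial.eval_map]⟩

/-- With `x` and `y`, the quartic `w ^ 2 + b * w + c` in `z`, where `w = z ^ 2 + z`, acquires all
its roots `x, x + 1, y, y + 1`. -/
lemma exists_injective_step_roots [CharP R 2] (b c : R) :
    ∃ (S : Type u) (_ : CommRing S) (φ : R →+* S), Function.Injective φ ∧
      ∃ x y, (x ^ 2 + x) + (y ^ 2 + y) = φ b ∧ (x ^ 2 + x) * (y ^ 2 + y) = φ c := by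
  have : Nontrivial R := CharP.nontrivial_of_char_ne_one (v := 2) (by norm_num)
  have hquartic :
      ((.X ^ 2 + .X) ^ 2 + .C b * (.X ^ 2 + .X) + .C c : Polynomial R).natDegree = 4 := by
    compute_degree!
  obtain ⟨S, _, φ, hφ, x, hx⟩ := exists_injective_eval₂_eq_zero_of_monic
    (p := (.X ^ 2 + .X) ^ 2 + .C b * (.X ^ 2 + .X) + .C c) (by monicity!) (by lia)
  have : Nontrivial S := hφ.nontrivial
  have hquadratic : (.X ^ 2 + .X + .C (φ b + (x ^ 2 + x)) : Polynomial S).natDegree = 2 := by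
    compute_degree!
  obtain ⟨T, _, ψ, hψ, y, hy⟩ := exists_injective_eval₂_eq_zero_of_monic
    (p := .X ^ 2 + .X + .C (φ b + (x ^ 2 + x))) (by monicity!) (by lia)
  have : CharP T 2 := charP_of_injective_ringHom (f := ψ.comp φ) (hψ.comp hφ) 2
  simp only [Polynomial.eval₂_add, Polynomial.eval₂_mul, Polynomial.eval₂_pow, Polynomial.eval₂_X,
    Polynomial.eval₂_C] at hx hy
  apply_fun ψ at hx
  simp only [map_add, map_mul, map_pow, map_zero] at hx hy
  exact ⟨T, _, ψ.comp φ, hψ.comp hφ, ψ x, y, by grind [RingHom.comp_apply],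
    by grind [RingHom.comp_apply]⟩

end RingExtensions

lemma mul_mem_pow_of_le {R : Type*} [CommSemiring R] {I : Ideal R} {x y : R} {m n k : ℕ}
    (hx : x ∈ I ^ m) (hy : y ∈ I ^ n) (hk : k ≤ m + n) : x * y ∈ I ^ k :=
  Ideal.pow_le_pow_right hk (pow_add I m n ▸ Ideal.mul_mem_mul hx hy)

section Sextic

open Polynomial (aeval eval)

variable {R : Type*} [CommRing R]

/-- The monic sextic with vanishing subleading coefficient whose other coefficients are
`a 2, …, a 6`, indexed as elementary symmetric functions of the roots. -/
noncomputable def depressedSextic (a : ℕ → R) : Polynomial R :=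
  .X ^ 6 + .C (a 2) * .X ^ 4 + .C (a 3) * .X ^ 3 + .C (a 4) * .X ^ 2 + .C (a 5) * .X + .C (a 6)

lemma eval_depressedSextic (a : ℕ → R) (x : R) :
    eval x (depressedSextic a) =
      x ^ 6 + a 2 * x ^ 4 + a 3 * x ^ 3 + a 4 * x ^ 2 + a 5 * x + a 6 := by
  simp [depressedSextic]

lemma map_depressedSextic {S : Type*} [CommRing S] (φ : R →+* S) (a : ℕ → R) :
    (depressedSextic a).map φ = depressedSextic (φ ∘ a) := by
  simp [depressedSextic]

/-- The constant term of `w ^ 2 + a 3 * w + stepConst a`, which for `w = x ^ 2 + x` is the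
difference `f (x + 1) - f x` of the sextic `f` in characteristic two. -/
def stepConst (a : ℕ → R) : R := 1 + a 2 + a 3 + a 4 + a 5

/-- The coefficient of `w = x ^ 2 + x` in the remainder of the sextic `f` modulo
`f (x + 1) - f x`. -/
def remainderSlope (a : ℕ → R) : R := (1 + a 2 + a 3) * a 3 + a 5

/-- The constant term of the remainder of the sextic `f` modulo `f (x + 1) - f x`. -/
def remainderConst (a : ℕ → R) : R := (1 + a 2 + a 3) * stepConst a + a 6

/-- The resultant of `w ^ 2 + a 3 * w + stepConst a` and the remainder
`remainderSlope a * w + remainderConst a`, in characteristic two. It is the total class of `λ²`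
as a polynomial in the Chern classes `a 2, …, a 6`. -/
def exteriorSquareClass (a : ℕ → R) : R :=
  remainderConst a ^ 2 + a 3 * remainderSlope a * remainderConst a
    + stepConst a * remainderSlope a ^ 2

lemma map_exteriorSquareClass {S : Type*} [CommRing S] (φ : R →+* S) (a : ℕ → R) :
    φ (exteriorSquareClass a) = exteriorSquareClass (φ ∘ a) := by
  simp [exteriorSquareClass, remainderConst, remainderSlope, stepConst]

variable [CharP R 2]

lemma eval_one_add_depressedSextic (a : ℕ → R) (x : R) :
    eval (1 + x) (depressedSextic a) = eval x (depressedSextic a) +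
      ((x ^ 2 + x) ^ 2 + a 3 * (x ^ 2 + x) + stepConst a) := by
  simp only [eval_depressedSextic, stepConst]
  grind

lemma eval_depressedSextic_eq_of_step_eq_zero {a : ℕ → R} {x : R}
    (hx : (x ^ 2 + x) ^ 2 + a 3 * (x ^ 2 + x) + stepConst a = 0) :
    eval x (depressedSextic a) = remainderSlope a * (x ^ 2 + x) + remainderConst a := by
  have hdiv : eval x (depressedSextic a) =
      (x ^ 2 + (1 + a 2 + a 3)) * ((x ^ 2 + x) ^ 2 + a 3 * (x ^ 2 + x) + stepConst a) +
        (remainderSlope a * (x ^ 2 + x) + remainderConst a) := by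
    simp only [eval_depressedSextic, stepConst, remainderSlope, remainderConst]
    grind
  rw [hdiv, hx, mul_zero, zero_add]

lemma prod_prod_one_add_add_of_step_roots {ι : Type*} [Fintype ι] {t : ι → R} {a : ℕ → R}
    (hf : ∏ i, (.X + .C (t i)) = depressedSextic a) {x y : R}
    (hadd : (x ^ 2 + x) + (y ^ 2 + y) = a 3) (hmul : (x ^ 2 + x) * (y ^ 2 + y) = stepConst a) :
    ∏ i, ∏ j, (1 + t i + t j) = exteriorSquareClass a ^ 2 := by
  have heval (z : R) : ∏ i, (z + t i) = eval z (depressedSextic a) := by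
    simp [← hf, Polynomial.eval_prod]
  have hroot (i : ι) : eval (t i) (depressedSextic a) = 0 := by
    rw [← heval]
    exact prod_eq_zero (mem_univ i) (CharTwo.add_self_eq_zero _)
  have hstep (z : R) : (z ^ 2 + z) ^ 2 + a 3 * (z ^ 2 + z) + stepConst a =
      (x + z) * (1 + x + z) * ((y + z) * (1 + y + z)) := by
    rw [← hadd, ← hmul]
    grind
  have hstepx : (x ^ 2 + x) ^ 2 + a 3 * (x ^ 2 + x) + stepConst a = 0 := by
    rw [hstep, CharTwo.add_self_eq_zero, zero_mul, zero_mul]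
  have hstepy : (y ^ 2 + y) ^ 2 + a 3 * (y ^ 2 + y) + stepConst a = 0 := by
    rw [hstep, CharTwo.add_self_eq_zero, zero_mul, mul_zero]
  calc ∏ i, ∏ j, (1 + t i + t j)
      = ∏ i, ((x + t i) * (1 + x + t i) * ((y + t i) * (1 + y + t i))) := by
        simp only [heval, eval_one_add_depressedSextic, hroot, zero_add, hstep]
    _ = (eval x (depressedSextic a) * eval y (depressedSextic a)) ^ 2 := by
        simp only [prod_mul_distrib, heval, eval_one_add_depressedSextic, hstepx, hstepy, add_zero]
        ring
    _ = exteriorSquareClass a ^ 2 := by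
        rw [eval_depressedSextic_eq_of_step_eq_zero hstepx,
          eval_depressedSextic_eq_of_step_eq_zero hstepy, exteriorSquareClass, ← hadd, ← hmul]
        ring

theorem prod_prod_one_add_add_eq_exteriorSquareClass_sq {ι : Type*} [Fintype ι] {t : ι → R}
    {a : ℕ → R} (hf : ∏ i, (.X + .C (t i)) = depressedSextic a) :
    ∏ i, ∏ j, (1 + t i + t j) = exteriorSquareClass a ^ 2 := by
  obtain ⟨S, _, φ, hφ, x, y, hadd, hmul⟩ := exists_injective_step_roots (a 3) (stepConst a)
  have : CharP S 2 := charP_of_injective_ringHom hφ 2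
  apply hφ
  have hfS : ∏ i, (.X + .C (φ (t i))) = depressedSextic (φ ∘ a) := by
    simp [← map_depressedSextic, ← hf, Polynomial.map_prod]
  have hmulS : (x ^ 2 + x) * (y ^ 2 + y) = stepConst (φ ∘ a) := by
    simp [hmul, stepConst]
  simpa [map_exteriorSquareClass] using prod_prod_one_add_add_of_step_roots hfS hadd hmulS

lemma exteriorSquareClass_sub_mem_pow_nine {a : ℕ → R} {I : Ideal R} (ha : ∀ k, a k ∈ I ^ k) :
    exteriorSquareClass a - (1 + (a 3 * a 5 + a 4 ^ 2 + a 2 ^ 4)) ∈ I ^ 9 := by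
  have ha_mem {k n : ℕ} (hn : n ≤ k) : a k ∈ I ^ n := Ideal.pow_le_pow_right hn (ha k)
  have ha_mul_mem {j k n : ℕ} (hn : n ≤ j + k) : a j * a k ∈ I ^ n :=
    mul_mem_pow_of_le (ha j) (ha k) hn
  set α := a 2 * a 3 + a 5 + a 3 * a 3 with hα
  set γ := a 5 + a 6 + a 2 * a 4 + a 3 * a 3 + a 2 * a 5 + a 3 * a 4 + a 3 * a 5 with hγ
  have hslope : remainderSlope a = a 3 + α := by
    rw [remainderSlope, hα]
    ring
  have hconst : remainderConst a = 1 + (a 2 * a 2 + a 4 + γ) := by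
    rw [remainderConst, stepConst, hγ]
    grind
  have hα_mem : α ∈ I ^ 5 := by
    refine add_mem (add_mem ?_ ?_) ?_ <;> first | exact ha_mem (by lia) | exact ha_mul_mem (by lia)
  have hγ_mem : γ ∈ I ^ 5 := by
    refine add_mem (add_mem (add_mem (add_mem (add_mem (add_mem ?_ ?_) ?_) ?_) ?_) ?_) ?_ <;>
      first | exact ha_mem (by lia) | exact ha_mul_mem (by lia)
  have hslope_mem : a 3 + α ∈ I ^ 3 := add_mem (ha 3) (Ideal.pow_le_pow_right (by lia) hα_mem)
  have hconst_mem : a 2 * a 2 + a 4 + γ ∈ I ^ 4 :=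
    add_mem (add_mem (ha_mul_mem le_rfl) (ha 4)) (Ideal.pow_le_pow_right (by lia) hγ_mem)
  have hdiff : exteriorSquareClass a - (1 + (a 3 * a 5 + a 4 ^ 2 + a 2 ^ 4)) =
      γ * γ + a 3 * (a 3 + α) * (a 2 * a 2 + a 4 + γ) + a 3 * a 3 * (a 4 + a 5)
        + α * α * stepConst a := by
    rw [exteriorSquareClass, hslope, hconst, hα, stepConst]
    grind
  rw [hdiff]
  refine add_mem (add_mem (add_mem ?_ ?_) ?_) ?_
  · exact mul_mem_pow_of_le hγ_mem hγ_mem (by lia)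
  · exact mul_mem_pow_of_le (mul_mem_pow_of_le (ha 3) hslope_mem le_rfl) hconst_mem (by lia)
  · exact mul_mem_pow_of_le (ha_mul_mem le_rfl)
      (add_mem (ha_mem (n := 3) (by lia)) (ha_mem (by lia))) le_rfl
  · exact Ideal.mul_mem_right _ _ (mul_mem_pow_of_le hα_mem hα_mem (by lia))

end Sextic

section Homogeneous

variable {σ R : Type*} [CommRing R]

lemma homogeneousComponent_mem_span_singleton {p q : MvPolynomial σ R} {d : ℕ}
    (hq : q.IsHomogeneous d) (hp : p ∈ Ideal.span {q}) (n : ℕ) :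
    homogeneousComponent n p ∈ Ideal.span {q} := by
  let _ := MvPolynomial.gradedAlgebra (σ := σ) (R := R)
  refine homogeneousComponent_mem_of_mem (Ideal.homogeneous_span _ _ ?_) hp n
  rintro _ rfl
  exact ⟨d, hq⟩

lemma mem_pow_idealOfVars_of_isHomogeneous {p : MvPolynomial σ R} {n : ℕ}
    (hp : p.IsHomogeneous n) : p ∈ idealOfVars σ R ^ n := by
  rw [mem_pow_idealOfVars_iff']
  exact fun d hd ↦ hp.coeff_eq_zero hd.ne

lemma homogeneousComponent_eq_zero_of_mem_pow_idealOfVars {p : MvPolynomial σ R} {m n : ℕ}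
    (hp : p ∈ idealOfVars σ R ^ m) (hnm : n < m) : homogeneousComponent n p = 0 := by
  rw [mem_pow_idealOfVars_iff] at hp
  exact homogeneousComponent_eq_zero' _ _ fun d hd ↦ (hnm.trans_le (hp d hd)).ne'

lemma span_singleton_ne_top_of_isHomogeneous [Nontrivial R] {q : MvPolynomial σ R} {d : ℕ}
    (hq : q.IsHomogeneous d) (hd : d ≠ 0) : Ideal.span {q} ≠ ⊤ := by
  intro h
  have hle : Ideal.span {q} ≤ idealOfVars σ R ^ d :=
    (Ideal.span_singleton_le_iff_mem _).2 (mem_pow_idealOfVars_of_isHomogeneous hq)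
  have hone : C 1 ∈ idealOfVars σ R ^ d := hle (h ▸ Submodule.mem_top)
  simpa [hd] using (C_mem_pow_idealOfVars_iff d 1).1 hone

end Homogeneous

lemma isHomogeneous_e (k : ℕ) : (e k).IsHomogeneous k := by
  rw [e, esymm]
  exact IsHomogeneous.sum _ _ _ fun s hs ↦ by
    simpa [(mem_powersetCard.1 hs).2] using
      IsHomogeneous.prod s _ (fun _ ↦ 1) fun i _ ↦ isHomogeneous_X (ZMod 2) i

lemma Q_eq_exteriorPowerClass_mul : Q = exteriorPowerClass X 2 * exteriorPowerClass X 4 := by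
  rw [Q, exteriorPowerClass_two]
  rfl

lemma prod_X_add_C_mk_X_eq_depressedSextic :
    ∏ i, (.X + .C (Ideal.Quotient.mk (Ideal.span {e 1}) (X i))) =
      depressedSextic (Ideal.Quotient.mk (Ideal.span {e 1}) ∘ e) := by
  have hvieta := congrArg (Polynomial.map (Ideal.Quotient.mk (Ideal.span {e 1})))
    (prod_C_add_X_eq_sum_esymm (ZMod 2) (Fin 6))
  have he₁ : Ideal.Quotient.mk (Ideal.span {e 1}) (e 1) = 0 :=
    Ideal.Quotient.eq_zero_iff_mem.2 (Ideal.mem_span_singleton_self _)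
  have he₀ : e 0 = 1 := esymm_zero _ _
  simpa [depressedSextic, Polynomial.map_prod, sum_range_succ, ← e.eq_def, he₀, he₁] using hvieta

theorem Q_sub_exteriorSquareClass_sq_mem : Q - exteriorSquareClass e ^ 2 ∈ Ideal.span {e 1} := by
  set φ := Ideal.Quotient.mk (Ideal.span {e 1})
  have : Nontrivial (MvPolynomial (Fin 6) (ZMod 2) ⧸ Ideal.span {e 1}) :=
    Ideal.Quotient.nontrivial_iff.2
      (span_singleton_ne_top_of_isHomogeneous (isHomogeneous_e 1) one_ne_zero)
  have : CharP (MvPolynomial (Fin 6) (ZMod 2) ⧸ Ideal.span {e 1}) 2 :=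
    charP_of_injective_algebraMap (algebraMap (ZMod 2) _).injective 2
  have hsum : ∑ i, (φ ∘ X) i = 0 := by
    simp only [Function.comp_apply]
    rw [← map_sum, ← esymm_one, Ideal.Quotient.eq_zero_iff_mem]
    exact Ideal.mem_span_singleton_self _
  rw [← Ideal.Quotient.eq_zero_iff_mem, map_sub, sub_eq_zero]
  calc φ Q = exteriorPowerClass (φ ∘ X) 2 ^ 2 := by
        rw [Q_eq_exteriorPowerClass_mul, map_mul, map_exteriorPowerClass, map_exteriorPowerClass,
          ← exteriorPowerClass_eq_of_add_eq_card hsum (k := 2) (l := 4) rfl, sq]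
    _ = ∏ i, ∏ j, (1 + φ (X i) + φ (X j)) := exteriorPowerClass_two_sq _
    _ = φ (exteriorSquareClass e ^ 2) := by
        rw [prod_prod_one_add_add_eq_exteriorSquareClass_sq prod_X_add_C_mk_X_eq_depressedSextic,
          map_pow, map_exteriorSquareClass]

/-- the degree-16 homogeneous component of `Q` is congruent to
`e₃²e₅² + e₄⁴ + e₂⁸` modulo the ideal `(e₁)`. -/
theorem c16_spinrep_SU6 :
    homogeneousComponent 16 Q - (e 3 ^ 2 * e 5 ^ 2 + e 4 ^ 4 + e 2 ^ 8)
      ∈ Ideal.span {e 1} := by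
  set c₈ := e 3 * e 5 + e 4 ^ 2 + e 2 ^ 4 with hc₈
  set r := exteriorSquareClass e - (1 + c₈) with hr
  have hr_mem : r ^ 2 ∈ idealOfVars (Fin 6) (ZMod 2) ^ 18 := by
    rw [pow_mul _ 9 2]
    exact Ideal.pow_mem_pow (exteriorSquareClass_sub_mem_pow_nine fun k ↦
      mem_pow_idealOfVars_of_isHomogeneous (isHomogeneous_e k)) 2
  have hc₈_sq : c₈ ^ 2 = e 3 ^ 2 * e 5 ^ 2 + e 4 ^ 4 + e 2 ^ 8 := by
    simp only [hc₈, CharTwo.add_sq]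
    ring
  have hc₈_hom : (c₈ ^ 2).IsHomogeneous 16 :=
    ((((isHomogeneous_e 3).mul (isHomogeneous_e 5)).add ((isHomogeneous_e 4).pow 2)).add
      ((isHomogeneous_e 2).pow 4)).pow 2
  have hQ : Q - exteriorSquareClass e ^ 2 = Q - 1 - c₈ ^ 2 - r ^ 2 := by
    rw [← sub_add_cancel (exteriorSquareClass e) (1 + c₈), ← hr]
    simp only [CharTwo.add_sq]
    ring
  have h16 := homogeneousComponent_mem_span_singleton (isHomogeneous_e 1)
    Q_sub_exteriorSquareClass_sq_mem 16
  rwa [hQ, map_sub, map_sub, map_sub, homogeneousComponent_eq_self hc₈_hom,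
    homogeneousComponent_eq_zero_of_mem_pow_idealOfVars hr_mem (by norm_num),
    homogeneousComponent_of_mem (isHomogeneous_one _ _), if_neg (by norm_num), sub_zero, sub_zero,
    hc₈_sq] at h16
end
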